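/- Let n ∈ {2,3,...}, ϱ ≥ 1, α ∈ [1/n, 1), and ℓ ∈ (0, π/2). Then there exists a function c_0 : (0,∞) × (0,∞) → ℝ such that: (1) for all t > 0 and all x > π/2, a_0(t,x) ≥ (cos ℓ / (2ϱ)) (x/ℓ)^{2ϱ-1} (α / t^{αn}) [ E_α(t^α) − E_α(t^α(1−(ℓ/x)^{2ϱ})) + c_0(t,x) ]; and (2) for every β ∈ ℝ and every m > 0, c_0(t, m t^β) / E_α(t^α) → 0 as t → ∞. -/

import Mathlib

open Real MeasureTheory Filter Topology intervalIntegral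

/-- The two-parameter Mittag-Leffler function `E_{α,β}(z) = ∑ z^n / Γ(αn+β)`. -/
noncomputable def ML (a b z : ℝ) : ℝ :=
  ∑' n : ℕ, z ^ n / Real.Gamma (a * n + b)

/-- The coefficient `a_0(t,x)`. -/
noncomputable def aZero (α ϱ t x : ℝ) : ℝ :=
  ∫ ξ in (0 : ℝ)..(Real.pi / (2 * x)), ML α 1 (t ^ α * (1 - ξ ^ (2 * ϱ))) * Real.cos (x * ξ)

/-!
Write `p = 2ϱ`, `w = t ^ α` and `L = ℓ / x`. On `[0, L]` the cosine is at least `cos ℓ`, so it is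
enough to bound `∫₀ᴸ E_α(w(1 - ξ^p)) dξ` from below. Since `E_α' = E_{α,α} / α`, the difference
`E_α(w) - E_α(w(1 - L^p))` is the integral over `[0, L]` of
`(p w / α) ξ^(p-1) E_{α,α}(w(1 - ξ^p))`. Here `ξ^(p-1) ≤ L^(p-1)`, and `1 ≤ α n` makes
`Γ(α(j + n)) ≥ Γ(αj + 1)` for large `j`, whence `E_{α,α}(z) ≤ P(z) + z^(n-1) E_α(z)` with `P` a
partial sum of the series of `E_{α,α}`. The leftover `(p / α) w P(w)` is a polynomial in `w`, so it
is negligible against `E_α(w)`, uniformly in `x`.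
-/

section MittagLeffler

lemma rpow_mul_exp_neg_le_Gamma_add_one {M s : ℝ} (hM : 0 ≤ M) (hs : 0 ≤ s) :
    M ^ s * exp (-M) ≤ Gamma (s + 1) := by
  have hGamma_int : IntegrableOn (fun u => exp (-u) * u ^ s) (Set.Ioi 0) := by
    simpa using GammaIntegral_convergent (by linarith : 0 < s + 1)
  have hsub : Set.Ioi M ⊆ Set.Ioi 0 := Set.Ioi_subset_Ioi hM
  calc M ^ s * exp (-M) = ∫ u in Set.Ioi M, M ^ s * exp (-u) := by
        rw [MeasureTheory.integral_const_mul, integral_exp_neg_Ioi]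
    _ ≤ ∫ u in Set.Ioi M, exp (-u) * u ^ s := by
        refine setIntegral_mono_on ((integrableOn_exp_neg_Ioi M).const_mul _)
          (hGamma_int.mono_set hsub) measurableSet_Ioi fun u hu => ?_
        have hMu : M ≤ u := (Set.mem_Ioi.1 hu).le
        rw [mul_comm]
        gcongr
    _ ≤ ∫ u in Set.Ioi 0, exp (-u) * u ^ s := by
        refine setIntegral_mono_set hGamma_int ?_ hsub.eventuallyLE
        filter_upwards [ae_restrict_mem measurableSet_Ioi] with u hu
        exact mul_nonneg (exp_pos _).le (rpow_nonneg (Set.mem_Ioi.1 hu).le _)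
    _ = Gamma (s + 1) := by simp [Gamma_eq_integral (by linarith : 0 < s + 1)]

lemma summable_pow_div_Gamma {a : ℝ} (ha : 0 < a) (b z : ℝ) :
    Summable fun k : ℕ => z ^ k / Gamma (a * k + b) := by
  set M : ℝ := (2 * (|z| + 1)) ^ a⁻¹ with hM_def
  have hM : 0 < M := by positivity
  have hMa : M ^ a = 2 * (|z| + 1) := by
    rw [hM_def, ← rpow_mul (by positivity), inv_mul_cancel₀ ha.ne', rpow_one]
  have hratio : |z| / M ^ a ≤ 1 / 2 := by
    rw [hMa, div_le_div_iff₀ (by positivity) two_pos]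
    linarith
  have hgeom : Summable fun k : ℕ => exp M * M ^ (1 - b) * (1 / 2 : ℝ) ^ k :=
    summable_geometric_two.mul_left _
  have hlarge : ∀ᶠ k : ℕ in atTop, 1 - b ≤ a * k :=
    (tendsto_natCast_atTop_atTop.const_mul_atTop ha).eventually_ge_atTop _
  refine hgeom.of_norm_bounded_eventually_nat ?_
  filter_upwards [hlarge] with k hk
  have hGamma : M ^ (a * k + b - 1) * exp (-M) ≤ Gamma (a * k + b) := by
    simpa using rpow_mul_exp_neg_le_Gamma_add_one hM.le (by linarith : 0 ≤ a * k + b - 1)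
  have hMk : M ^ (a * k + b - 1) = (M ^ a) ^ k / M ^ (1 - b) := by
    rw [← rpow_natCast, ← rpow_mul hM.le, ← rpow_sub hM]
    ring_nf
  have hpos : 0 < M ^ (a * k + b - 1) * exp (-M) := by positivity
  calc ‖z ^ k / Gamma (a * k + b)‖ = |z| ^ k / Gamma (a * k + b) := by
        rw [norm_div, norm_pow, Real.norm_eq_abs, norm_of_nonneg (hpos.trans_le hGamma).le]
    _ ≤ |z| ^ k / (M ^ (a * k + b - 1) * exp (-M)) := by gcongr
    _ = exp M * M ^ (1 - b) * (|z| / M ^ a) ^ k := by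
        rw [hMk, exp_neg, div_pow]
        field_simp
    _ ≤ exp M * M ^ (1 - b) * (1 / 2) ^ k := by gcongr

lemma hasDerivAt_tsum_mul_pow {𝕜 : Type*} [RCLike 𝕜] {c : ℕ → 𝕜}
    (hc : ∀ z, Summable fun k => c k * z ^ k) (z : 𝕜) :
    HasDerivAt (fun y => ∑' k, c k * y ^ k) (∑' k : ℕ, (k + 1) * c (k + 1) * z ^ k) z := by
  set R : ℝ := ‖z‖ + 1 with hR
  have hR1 : 1 ≤ R := by rw [hR]; linarith [norm_nonneg z]
  have hbound : Summable fun k => ‖c k * ((2 * R : ℝ) : 𝕜) ^ k‖ := (hc _).norm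
  have hterm : ∀ k : ℕ, ∀ y ∈ Metric.ball (0 : 𝕜) R,
      ‖c k * (k * y ^ (k - 1))‖ ≤ ‖c k * ((2 * R : ℝ) : 𝕜) ^ k‖ := by
    intro k y hy
    have hyR : ‖y‖ ≤ R := (mem_ball_zero_iff.1 hy).le
    have hk : (k : ℝ) ≤ 2 ^ k := by exact_mod_cast k.lt_two_pow_self.le
    rw [norm_mul, norm_mul, norm_mul, norm_pow, norm_pow, RCLike.norm_natCast,
      RCLike.norm_of_nonneg (by positivity), mul_pow]
    gcongr
    calc ‖y‖ ^ (k - 1) ≤ R ^ (k - 1) := by gcongr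
      _ ≤ R ^ k := pow_le_pow_right₀ hR1 (Nat.sub_le k 1)
  have hz : z ∈ Metric.ball (0 : 𝕜) R := mem_ball_zero_iff.2 (lt_add_one _)
  have hderiv := hasDerivAt_tsum_of_isPreconnected hbound Metric.isOpen_ball
    (convex_ball (0 : 𝕜) R).isPreconnected
    (fun k y _ => (hasDerivAt_pow k y).const_mul (c k)) hterm hz (hc z) hz
  refine hderiv.congr_deriv ?_
  rw [(Summable.of_norm_bounded hbound fun k => hterm k z hz).tsum_eq_zero_add]
  simp only [CharP.cast_eq_zero, zero_mul, mul_zero, zero_add, Nat.add_sub_cancel, Nat.cast_add,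
    Nat.cast_one]
  exact tsum_congr fun k => by ring

lemma hasDerivAt_ML {a : ℝ} (ha : 0 < a) (b z : ℝ) :
    HasDerivAt (ML a b) (∑' k : ℕ, (k + 1) * (Gamma (a * (k + 1) + b))⁻¹ * z ^ k) z := by
  have hML : ML a b = fun y => ∑' k : ℕ, (Gamma (a * k + b))⁻¹ * y ^ k := by
    funext y
    simp only [ML, div_eq_inv_mul]
  rw [hML]
  simpa only [Nat.cast_add, Nat.cast_one] using
    hasDerivAt_tsum_mul_pow (c := fun k : ℕ => (Gamma (a * k + b))⁻¹)
      (fun y => by simpa only [div_eq_inv_mul] using summable_pow_div_Gamma ha b y) z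

lemma continuous_ML {a : ℝ} (ha : 0 < a) (b : ℝ) : Continuous (ML a b) :=
  continuous_iff_continuousAt.2 fun z => (hasDerivAt_ML ha b z).continuousAt

lemma hasDerivAt_ML_one {a : ℝ} (ha : 0 < a) (z : ℝ) :
    HasDerivAt (ML a 1) (ML a a z / a) z := by
  refine (hasDerivAt_ML ha 1 z).congr_deriv ?_
  rw [ML, ← tsum_div_const]
  refine tsum_congr fun k => ?_
  have hGamma : Gamma (a * (k + 1) + 1) = a * (k + 1) * Gamma (a * k + a) := by
    rw [Gamma_add_one (by positivity), mul_add_one]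
  rw [hGamma]
  field_simp

variable {a b : ℝ}

lemma pow_div_Gamma_nonneg (ha : 0 ≤ a) (hb : 0 ≤ b) {z : ℝ} (hz : 0 ≤ z) (k : ℕ) :
    0 ≤ z ^ k / Gamma (a * k + b) :=
  div_nonneg (pow_nonneg hz k) (Gamma_nonneg_of_nonneg (by positivity))

lemma ML_nonneg (ha : 0 ≤ a) (hb : 0 ≤ b) {z : ℝ} (hz : 0 ≤ z) : 0 ≤ ML a b z :=
  tsum_nonneg (pow_div_Gamma_nonneg ha hb hz)

/-- The partial sum `∑_{k < N} z^k / Γ(ak+b)` of the series defining `E_{a,b}`; it carries the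
polynomial error terms in comparisons of Mittag-Leffler functions. -/
noncomputable def mlPartialSum (a b : ℝ) (N : ℕ) (z : ℝ) : ℝ :=
  ∑ k ∈ Finset.range N, z ^ k / Gamma (a * k + b)

lemma mlPartialSum_nonneg (ha : 0 ≤ a) (hb : 0 ≤ b) (N : ℕ) {z : ℝ} (hz : 0 ≤ z) :
    0 ≤ mlPartialSum a b N z :=
  Finset.sum_nonneg fun k _ => pow_div_Gamma_nonneg ha hb hz k

lemma monotoneOn_mlPartialSum (ha : 0 ≤ a) (hb : 0 ≤ b) (N : ℕ) :
    MonotoneOn (mlPartialSum a b N) (Set.Ici 0) := by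
  intro y hy z _ hyz
  refine Finset.sum_le_sum fun k _ => ?_
  exact div_le_div_of_nonneg_right (pow_le_pow_left₀ hy hyz k)
    (Gamma_nonneg_of_nonneg (by positivity))

lemma tsum_nat_add_le_ML (ha : 0 < a) (hb : 0 ≤ b) {z : ℝ} (hz : 0 ≤ z) (N : ℕ) :
    ∑' k : ℕ, z ^ (k + N) / Gamma (a * (k + N : ℕ) + b) ≤ ML a b z := by
  rw [ML, ← (summable_pow_div_Gamma ha b z).sum_add_tsum_nat_add N]
  exact le_add_of_nonneg_left (mlPartialSum_nonneg ha.le hb N hz)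

/-- Past the initial terms, replacing `ak + c` by `a(k+n) + b` does not decrease `Γ`. -/
lemma exists_ML_le_mlPartialSum_add_pow_mul_ML {c : ℝ} {n : ℕ} (ha : 0 < a) (hc : 0 ≤ c)
    (hcb : c ≤ a * n + b) :
    ∃ N : ℕ, ∀ z, 0 ≤ z → ML a b z ≤ mlPartialSum a b N z + z ^ n * ML a c z := by
  obtain ⟨N, hN⟩ : ∃ N : ℕ, 2 / a ≤ N := exists_nat_ge _
  have hN : 2 ≤ a * N := by rwa [div_le_iff₀' ha] at hN
  refine ⟨N + n, fun z hz => ?_⟩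
  have hterm : ∀ k : ℕ, z ^ (k + (N + n)) / Gamma (a * (k + (N + n) : ℕ) + b) ≤
      z ^ n * (z ^ (k + N) / Gamma (a * (k + N : ℕ) + c)) := by
    intro k
    have hak : 0 ≤ a * k := by positivity
    have hle : a * (k + N : ℕ) + c ≤ a * (k + (N + n) : ℕ) + b := by push_cast; linarith
    have htwo : 2 ≤ a * (k + N : ℕ) + c := by push_cast; linarith
    have hGamma : Gamma (a * (k + N : ℕ) + c) ≤ Gamma (a * (k + (N + n) : ℕ) + b) :=
      Gamma_strictMonoOn_Ici.monotoneOn htwo (htwo.trans hle) hle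
    have hpos : 0 < Gamma (a * (k + N : ℕ) + c) := Gamma_pos_of_pos (by linarith)
    calc z ^ (k + (N + n)) / Gamma (a * (k + (N + n) : ℕ) + b)
        ≤ z ^ (k + (N + n)) / Gamma (a * (k + N : ℕ) + c) :=
        div_le_div_of_nonneg_left (pow_nonneg hz _) hpos hGamma
      _ = z ^ n * (z ^ (k + N) / Gamma (a * (k + N : ℕ) + c)) := by ring
  have hsum_b := summable_pow_div_Gamma ha b z
  have hsum_c := (summable_nat_add_iff N).2 (summable_pow_div_Gamma ha c z)
  calc ML a b z
      = mlPartialSum a b (N + n) z +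
          ∑' k : ℕ, z ^ (k + (N + n)) / Gamma (a * (k + (N + n) : ℕ) + b) :=
        (hsum_b.sum_add_tsum_nat_add (N + n)).symm
    _ ≤ mlPartialSum a b (N + n) z +
          ∑' k : ℕ, z ^ n * (z ^ (k + N) / Gamma (a * (k + N : ℕ) + c)) := by
        gcongr
        · exact (summable_nat_add_iff (N + n)).2 hsum_b
        · exact hsum_c.mul_left _
        · exact hterm _
    _ ≤ mlPartialSum a b (N + n) z + z ^ n * ML a c z := by
        rw [tsum_mul_left]
        gcongr
        exact tsum_nat_add_le_ML ha hc hz N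

lemma isLittleO_pow_ML (ha : 0 < a) (hb : 0 ≤ b) (k : ℕ) :
    (fun z : ℝ => z ^ k) =o[atTop] ML a b := by
  have hGamma : 0 < Gamma (a * (k + 1 : ℕ) + b) := Gamma_pos_of_pos (by positivity)
  refine (Asymptotics.isLittleO_pow_pow_atTop_of_lt k.lt_succ_self).trans_isBigO ?_
  refine Asymptotics.IsBigO.of_bound (Gamma (a * (k + 1 : ℕ) + b)) ?_
  filter_upwards [eventually_ge_atTop 0] with z hz
  have hle : z ^ (k + 1) / Gamma (a * (k + 1 : ℕ) + b) ≤ ML a b z :=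
    (summable_pow_div_Gamma ha b z).le_tsum (k + 1)
      fun j _ => pow_div_Gamma_nonneg ha.le hb hz j
  rwa [norm_of_nonneg (by positivity), norm_of_nonneg (ML_nonneg ha.le hb hz),
    ← div_le_iff₀' hGamma]

lemma isLittleO_mul_mlPartialSum_ML {c d : ℝ} (hc : 0 < c) (hd : 0 ≤ d) (N : ℕ) :
    (fun z => z * mlPartialSum a b N z) =o[atTop] ML c d := by
  simp only [mlPartialSum, Finset.mul_sum]
  refine Asymptotics.IsLittleO.fun_sum fun k _ => ?_
  have hterm := (isLittleO_pow_ML hc hd (k + 1)).const_mul_left (Gamma (a * k + b))⁻¹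
  exact hterm.congr_left fun z => by ring

end MittagLeffler

section Integrals

variable {a p : ℝ}

lemma integral_ML_comp_one_sub_rpow (ha : 0 < a) (hp : 1 ≤ p) (w L : ℝ) :
    ∫ ξ in (0 : ℝ)..L, p * w / a * ξ ^ (p - 1) * ML a a (w * (1 - ξ ^ p)) =
      ML a 1 w - ML a 1 (w * (1 - L ^ p)) := by
  have hderiv : ∀ ξ : ℝ, HasDerivAt (fun y => -ML a 1 (w * (1 - y ^ p)))
      (p * w / a * ξ ^ (p - 1) * ML a a (w * (1 - ξ ^ p))) ξ := by
    intro ξ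
    have hinner := ((hasDerivAt_rpow_const (x := ξ) (Or.inr hp)).const_sub 1).const_mul w
    exact ((hasDerivAt_ML_one ha _).comp ξ hinner).neg.congr_deriv (by ring)
  have hcont : Continuous fun ξ : ℝ =>
      p * w / a * ξ ^ (p - 1) * ML a a (w * (1 - ξ ^ p)) := by
    have hML := continuous_ML ha a
    have hrpow := continuous_rpow_const (by linarith : 0 ≤ p)
    have hrpow' := continuous_rpow_const (by linarith : 0 ≤ p - 1)
    fun_prop
  rw [integral_eq_sub_of_hasDerivAt (fun ξ _ => hderiv ξ) (hcont.intervalIntegrable _ _),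
    zero_rpow (by linarith), sub_zero, mul_one]
  ring

lemma mul_one_sub_rpow_mem_Icc {w ξ : ℝ} (hw : 0 ≤ w) (hp : 0 ≤ p) (hξ : ξ ∈ Set.Icc (0 : ℝ) 1) :
    w * (1 - ξ ^ p) ∈ Set.Icc 0 w := by
  have hξ0 : 0 ≤ ξ ^ p := rpow_nonneg hξ.1 p
  have hξ1 : ξ ^ p ≤ 1 := rpow_le_one hξ.1 hξ.2 hp
  exact ⟨mul_nonneg hw (by linarith), mul_le_of_le_one_right hw (by linarith)⟩

lemma ML_sub_le_integral {w L C D : ℝ} (ha : 0 < a) (hp : 1 ≤ p) (hw : 0 ≤ w)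
    (hL0 : 0 ≤ L) (hL1 : L ≤ 1) (hCD : ∀ z ∈ Set.Icc 0 w, ML a a z ≤ C + D * ML a 1 z) :
    ML a 1 w - ML a 1 (w * (1 - L ^ p)) ≤
      p * w / a * L ^ (p - 1) *
        (C * L + D * ∫ ξ in (0 : ℝ)..L, ML a 1 (w * (1 - ξ ^ p))) := by
  have hML_one := continuous_ML ha 1
  have hML_a := continuous_ML ha a
  have hrpow := continuous_rpow_const (by linarith : 0 ≤ p)
  have hrpow' := continuous_rpow_const (by linarith : 0 ≤ p - 1)
  have hpoint : ∀ ξ ∈ Set.Icc 0 L, p * w / a * ξ ^ (p - 1) * ML a a (w * (1 - ξ ^ p)) ≤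
      p * w / a * L ^ (p - 1) * (C + D * ML a 1 (w * (1 - ξ ^ p))) := by
    rintro ξ ⟨hξ0, hξL⟩
    have hz := mul_one_sub_rpow_mem_Icc hw (by linarith : 0 ≤ p) ⟨hξ0, hξL.trans hL1⟩
    have hML_nonneg := ML_nonneg ha.le ha.le hz.1
    have hCDξ := hCD _ hz
    gcongr
  have hcont_int : ∀ f : ℝ → ℝ, Continuous f → IntervalIntegrable f volume 0 L :=
    fun f hf => hf.intervalIntegrable 0 L
  calc ML a 1 w - ML a 1 (w * (1 - L ^ p))
      = ∫ ξ in (0 : ℝ)..L, p * w / a * ξ ^ (p - 1) * ML a a (w * (1 - ξ ^ p)) :=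
        (integral_ML_comp_one_sub_rpow ha hp w L).symm
    _ ≤ ∫ ξ in (0 : ℝ)..L, p * w / a * L ^ (p - 1) * (C + D * ML a 1 (w * (1 - ξ ^ p))) :=
        integral_mono_on hL0 (hcont_int _ (by fun_prop)) (hcont_int _ (by fun_prop)) hpoint
    _ = p * w / a * L ^ (p - 1) *
          (C * L + D * ∫ ξ in (0 : ℝ)..L, ML a 1 (w * (1 - ξ ^ p))) := by
        rw [intervalIntegral.integral_const_mul,
          intervalIntegral.integral_add (hcont_int _ (by fun_prop)) (hcont_int _ (by fun_prop)),
          intervalIntegral.integral_const_mul, intervalIntegral.integral_const]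
        simp only [sub_zero, smul_eq_mul, mul_comm L]

lemma exists_ML_sub_le_mlPartialSum_add_integral {n : ℕ} (hn : 1 ≤ a * n) :
    ∃ N : ℕ, ∀ {p w L : ℝ}, 1 ≤ p → 0 ≤ w → 0 ≤ L → L ≤ 1 →
      ML a 1 w - ML a 1 (w * (1 - L ^ p)) ≤
        p / a * (w * mlPartialSum a a N w) +
          p / a * L ^ (p - 1) * w ^ n * ∫ ξ in (0 : ℝ)..L, ML a 1 (w * (1 - ξ ^ p)) := by
  have ha : 0 < a := pos_of_mul_pos_left (one_pos.trans_le hn) n.cast_nonneg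
  obtain ⟨m, rfl⟩ : ∃ m, n = m + 1 := Nat.exists_eq_succ_of_ne_zero <| by
    rintro rfl
    norm_num at hn
  obtain ⟨N, hN⟩ := exists_ML_le_mlPartialSum_add_pow_mul_ML (b := a) (n := m) ha zero_le_one
    (by simpa [mul_add_one] using hn)
  refine ⟨N, fun {p w L} hp hw hL0 hL1 => ?_⟩
  set I : ℝ := ∫ ξ in (0 : ℝ)..L, ML a 1 (w * (1 - ξ ^ p))
  set P : ℝ := mlPartialSum a a N w
  have hP : 0 ≤ P := mlPartialSum_nonneg ha.le ha.le N hw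
  have hCD : ∀ z ∈ Set.Icc 0 w, ML a a z ≤ P + w ^ m * ML a 1 z := by
    rintro z ⟨hz0, hzw⟩
    have hML := ML_nonneg ha.le zero_le_one hz0
    have hmono := monotoneOn_mlPartialSum ha.le ha.le N hz0 hw hzw
    exact (hN z hz0).trans (by gcongr)
  have hLp : L ^ (p - 1) * L ≤ 1 :=
    mul_le_one₀ (rpow_le_one hL0 hL1 (by linarith)) hL0 hL1
  calc ML a 1 w - ML a 1 (w * (1 - L ^ p))
      ≤ p * w / a * L ^ (p - 1) * (P * L + w ^ m * I) :=
        ML_sub_le_integral ha hp hw hL0 hL1 hCD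
    _ = p / a * (w * P) * (L ^ (p - 1) * L) + p / a * L ^ (p - 1) * w ^ (m + 1) * I := by ring
    _ ≤ p / a * (w * P) + p / a * L ^ (p - 1) * w ^ (m + 1) * I := by
        gcongr ?_ + _
        exact mul_le_of_le_one_right (by positivity) hLp

lemma cos_mul_integral_le_integral_mul_cos {f : ℝ → ℝ} {x ℓ : ℝ} (hx : 0 < x) (hℓ0 : 0 ≤ ℓ)
    (hℓ : ℓ ≤ π / 2) (hf : IntervalIntegrable f volume 0 (π / (2 * x)))
    (hf0 : ∀ ξ ∈ Set.Icc 0 (π / (2 * x)), 0 ≤ f ξ) :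
    cos ℓ * ∫ ξ in (0 : ℝ)..ℓ / x, f ξ ≤ ∫ ξ in (0 : ℝ)..π / (2 * x), f ξ * cos (x * ξ) := by
  have hL : 0 ≤ ℓ / x := by positivity
  have hLB : ℓ / x ≤ π / (2 * x) := by
    rw [← div_div]
    gcongr
  have hmem : ℓ / x ∈ Set.uIcc 0 (π / (2 * x)) := Set.mem_uIcc_of_le hL hLB
  have hfcos := hf.mul_continuousOn (g := fun ξ => cos (x * ξ)) (by fun_prop)
  have hleft := Set.uIcc_subset_uIcc_left hmem
  have hhead : ∫ ξ in (0 : ℝ)..ℓ / x, cos ℓ * f ξ ≤ ∫ ξ in (0 : ℝ)..ℓ / x, f ξ * cos (x * ξ) := by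
    refine integral_mono_on hL ((hf.mono_set hleft).const_mul _) (hfcos.mono_set hleft) ?_
    rintro ξ ⟨hξ0, hξL⟩
    have hf_nonneg := hf0 ξ ⟨hξ0, hξL.trans hLB⟩
    have hcos : cos ℓ ≤ cos (x * ξ) :=
      cos_le_cos_of_nonneg_of_le_pi (by positivity) (by linarith [pi_pos])
        ((le_div_iff₀' hx).1 hξL)
    rw [mul_comm]
    gcongr
  have htail : 0 ≤ ∫ ξ in ℓ / x..π / (2 * x), f ξ * cos (x * ξ) := by
    refine integral_nonneg hLB ?_
    rintro ξ ⟨hLξ, hξB⟩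
    have hξ0 : 0 ≤ ξ := hL.trans hLξ
    have hxξ : x * ξ ≤ π / 2 := by
      rwa [← div_div, le_div_iff₀' hx] at hξB
    have hxξ0 : 0 ≤ x * ξ := by positivity
    exact mul_nonneg (hf0 ξ ⟨hξ0, hξB⟩)
      (cos_nonneg_of_mem_Icc ⟨by linarith [pi_pos], hxξ⟩)
  rw [← intervalIntegral.integral_const_mul, ← integral_add_adjacent_intervals
    (hfcos.mono_set hleft) (hfcos.mono_set (Set.uIcc_subset_uIcc_right hmem))]
  linarith

lemma cos_mul_integral_ML_le_aZero {ϱ t x ℓ : ℝ} (ha : 0 < a) (hϱ : 0 ≤ ϱ) (ht : 0 ≤ t)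
    (hx : π / 2 ≤ x) (hℓ0 : 0 ≤ ℓ) (hℓ : ℓ ≤ π / 2) :
    cos ℓ * ∫ ξ in (0 : ℝ)..ℓ / x, ML a 1 (t ^ a * (1 - ξ ^ (2 * ϱ))) ≤ aZero a ϱ t x := by
  have hx0 : 0 < x := pi_div_two_pos.trans_le hx
  have hB : π / (2 * x) ≤ 1 := by
    rw [div_le_one (by positivity)]
    linarith
  have hcont : Continuous fun ξ : ℝ => ML a 1 (t ^ a * (1 - ξ ^ (2 * ϱ))) := by
    have hML := continuous_ML ha 1
    have hrpow := continuous_rpow_const (by linarith : 0 ≤ 2 * ϱ)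
    fun_prop
  refine cos_mul_integral_le_integral_mul_cos hx0 hℓ0 hℓ (hcont.intervalIntegrable _ _) ?_
  rintro ξ ⟨hξ0, hξB⟩
  exact ML_nonneg ha.le zero_le_one
    (mul_one_sub_rpow_mem_Icc (rpow_nonneg ht a) (by linarith) ⟨hξ0, hξB.trans hB⟩).1

end Integrals

theorem stmt17_general {n : ℕ} {ϱ α ℓ : ℝ} (hϱ : 1 / 2 ≤ ϱ) (hα : 1 ≤ α * n)
    (hℓ : ℓ ∈ Set.Ioc 0 (π / 2)) :
    ∃ c0 : ℝ → ℝ,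
      (∀ t : ℝ, 0 < t → ∀ x : ℝ, π / 2 ≤ x →
        aZero α ϱ t x ≥
          (cos ℓ / (2 * ϱ)) * (x / ℓ) ^ (2 * ϱ - 1) * (α / t ^ (α * n)) *
            (ML α 1 (t ^ α) - ML α 1 (t ^ α * (1 - (ℓ / x) ^ (2 * ϱ))) + c0 t)) ∧
      Tendsto (fun t : ℝ => c0 t / ML α 1 (t ^ α)) atTop (𝓝 0) := by
  have hα0 : 0 < α := pos_of_mul_pos_left (one_pos.trans_le hα) n.cast_nonneg
  obtain ⟨hℓ0, hℓ_le⟩ := hℓ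
  obtain ⟨N, hN⟩ := exists_ML_sub_le_mlPartialSum_add_integral hα
  refine ⟨fun t => -(2 * ϱ / α * (t ^ α * mlPartialSum α α N (t ^ α))), ?_, ?_⟩
  · intro t ht x hx
    have hx0 : 0 < x := pi_div_two_pos.trans_le hx
    have hdiff := hN (by linarith : 1 ≤ 2 * ϱ) (rpow_nonneg ht.le α) (by positivity : 0 ≤ ℓ / x)
      ((div_le_one hx0).2 (hℓ_le.trans hx))
    have hcos : 0 ≤ cos ℓ := cos_nonneg_of_mem_Icc ⟨by linarith, hℓ_le⟩
    refine le_trans ?_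
      (cos_mul_integral_ML_le_aZero hα0 (by linarith) ht.le hx hℓ0.le hℓ_le)
    rw [← inv_div ℓ x, inv_rpow (by positivity), rpow_mul ht.le, rpow_natCast]
    rw [← sub_le_iff_le_add', sub_eq_add_neg] at hdiff
    refine (mul_le_mul_of_nonneg_left hdiff (by positivity)).trans_eq ?_
    field_simp
  · have hlim := isLittleO_mul_mlPartialSum_ML (a := α) (b := α) hα0 zero_le_one N
    exact ((hlim.const_mul_left (2 * ϱ / α)).neg_left.tendsto_div_nhds_zero).comp
      (tendsto_rpow_atTop hα0)

theorem stmt17 (n : ℕ) (hn : 2 ≤ n) (ϱ α ℓ : ℝ) (hϱ : 1 ≤ ϱ)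
    (hα1 : 1 / (n : ℝ) ≤ α) (hα2 : α < 1) (hℓ : ℓ ∈ Set.Ioo (0 : ℝ) (Real.pi / 2)) :
    ∃ c0 : ℝ → ℝ → ℝ,
      (∀ t : ℝ, 0 < t → ∀ x : ℝ, Real.pi / 2 < x →
        aZero α ϱ t x ≥
          (Real.cos ℓ / (2 * ϱ)) * (x / ℓ) ^ (2 * ϱ - 1) * (α / t ^ (α * n)) *
            (ML α 1 (t ^ α) - ML α 1 (t ^ α * (1 - (ℓ / x) ^ (2 * ϱ))) + c0 t x)) ∧
      (∀ β : ℝ, ∀ m : ℝ, 0 < m →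
        Tendsto (fun t : ℝ => c0 t (m * t ^ β) / ML α 1 (t ^ α)) atTop (nhds 0)) := by
  have hn0 : (0 : ℝ) < n := by exact_mod_cast two_pos.trans_le hn
  obtain ⟨c0, hbound, hlim⟩ := stmt17_general (by linarith : 1 / 2 ≤ ϱ)
    ((div_le_iff₀ hn0).1 hα1) (Set.Ioo_subset_Ioc_self hℓ)
  exact ⟨fun t _ => c0 t, fun t ht x hx => hbound t ht x hx.le, fun _ _ _ => hlim⟩
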